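/- Let R be a commutative noetherian ring, C a finitely generated R-module with Supp_R(C) = Spec(R), and 0 → L → M → N → 0 a short exact sequence of R-modules. Suppose: the evaluation maps C ⊗_R Hom_R(C,M) → M and C ⊗_R Hom_R(C,N) → N are isomorphisms, Ext^i_R(C,M) = 0 for 0 < i ≤ m+1, Ext^i_R(C,N) = 0 for 0 < i ≤ m, Tor_i^R(C, Hom_R(C,M)) = 0 for 0 < i ≤ n, and Tor_i^R(C, Hom_R(C,N)) = 0 for 0 < i ≤ n+1. Then the evaluation map C ⊗_R Hom_R(C,L) → L is an isomorphism, Ext^i_R(C,L) = 0 for 0 < i ≤ m+1, and Tor_i^R(C, Hom_R(C,L)) = 0 for 0 < i ≤ n. -/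

import Mathlib

open CategoryTheory
open scoped TensorProduct

/-- The evaluation map `ξ : C ⊗ Hom(C,M) → M`, `c ⊗ f ↦ f c`. -/
noncomputable def evalMap (R : Type) [CommRing R] (C M : Type) [AddCommGroup C] [Module R C]
    [AddCommGroup M] [Module R M] : C ⊗[R] (C →ₗ[R] M) →ₗ[R] M :=
  TensorProduct.lift ((LinearMap.id : (C →ₗ[R] M) →ₗ[R] (C →ₗ[R] M)).flip)

/-!
Write `Cᵛ` for the character module of `C`. Since `ℚ/ℤ` is an injective cogenerator and
`(C ⊗ P)ᵛ ≃ Hom(P, Cᵛ)`, applying `(-)ᵛ` to the complex computing `Tor_i(C, D)` shows that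
`Tor_i(C, D) = 0` if and only if `Ext^i(D, Cᵛ) = 0`. So both vanishing assertions come from long
exact sequences of `Ext`, once `0 → Hom(C, L) → Hom(C, M) → Hom(C, N) → 0` is known to be exact.

Only surjectivity on the right is at stake. It holds after applying `C ⊗ -`, because the evaluation
maps identify the resulting map with `M → N`. The functor `C ⊗ -` reflects surjections: if `C ⊗ g`
is surjective and `K` is the kernel of `gᵛ`, then `Hom(C, K) = 0`, and full support of `C` forces
`K = 0`. Finally `Tor_1(C, Hom(C, N)) = 0` keeps the sequence left exact after tensoring, and the
five lemma gives the evaluation map of `L`.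
-/

universe w v u

section CharacterModule

variable {R : Type*} [CommRing R] {C A B D : Type*} [AddCommGroup C] [Module R C]
  [AddCommGroup A] [Module R A] [AddCommGroup B] [Module R B] [AddCommGroup D] [Module R D]

theorem exact_dual_of_exact {f : A →ₗ[R] B} {g : B →ₗ[R] D} (h : Function.Exact f g) :
    Function.Exact (CharacterModule.dual g) (CharacterModule.dual f) := by
  intro φ
  constructor
  · intro hφ
    have hker : g.ker.toAddSubgroup ≤ φ.ker := by
      intro b hb
      obtain ⟨a, rfl⟩ := (h b).mp hb
      exact congr($hφ a)
    let ψ : CharacterModule (B ⧸ g.ker) := QuotientAddGroup.lift _ φ hker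
    have hinj : Function.Injective (g.ker.liftQ g le_rfl) :=
      LinearMap.ker_eq_bot.mp (Submodule.ker_liftQ_eq_bot _ _ _ le_rfl)
    obtain ⟨χ, hχ⟩ := CharacterModule.dual_surjective_of_injective _ hinj ψ
    exact ⟨χ, by ext b; exact congr($hχ (Submodule.Quotient.mk b))⟩
  · rintro ⟨χ, rfl⟩
    rw [← LinearMap.comp_apply, ← CharacterModule.dual_comp, h.linearMap_comp_eq_zero,
      CharacterModule.dual_zero, LinearMap.zero_apply]

theorem exact_of_exact_dual {f : A →ₗ[R] B} {g : B →ₗ[R] D}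
    (h : Function.Exact (CharacterModule.dual g) (CharacterModule.dual f)) :
    Function.Exact f g := by
  intro b
  constructor
  · intro hb
    rw [← LinearMap.coe_range, SetLike.mem_coe, ← Submodule.Quotient.mk_eq_zero]
    refine CharacterModule.eq_zero_of_character_apply fun χ ↦ ?_
    have hχ : CharacterModule.dual f (CharacterModule.dual f.range.mkQ χ) = 0 := by
      rw [← LinearMap.comp_apply, ← CharacterModule.dual_comp, LinearMap.range_mkQ_comp,
        CharacterModule.dual_zero, LinearMap.zero_apply]
    obtain ⟨ψ, hψ⟩ := (h _).mp hχ
    calc χ (Submodule.Quotient.mk b) = ψ (g b) := congr($hψ.symm b)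
      _ = 0 := by rw [hb, map_zero]
  · rintro ⟨a, rfl⟩
    exact CharacterModule.eq_zero_of_character_apply fun χ ↦ congr($(h.apply_apply_eq_zero χ) a)

theorem exact_dual_iff {f : A →ₗ[R] B} {g : B →ₗ[R] D} :
    Function.Exact (CharacterModule.dual g) (CharacterModule.dual f) ↔ Function.Exact f g :=
  ⟨exact_of_exact_dual, exact_dual_of_exact⟩

theorem exact_lTensor_iff_exact_lcomp {f : A →ₗ[R] B} {g : B →ₗ[R] D} :
    Function.Exact (f.lTensor C) (g.lTensor C) ↔
      Function.Exact (g.lcomp R (CharacterModule C)) (f.lcomp R (CharacterModule C)) := by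
  rw [Function.Exact.iff_of_ladder_linearEquiv
    (LinearMap.lTensor_comp_comm f) (LinearMap.lTensor_comp_comm g), ← exact_dual_iff]
  exact Function.Exact.iff_of_ladder_linearEquiv
    ((CharacterModule.homEquiv.toLinearMap_symm_comp_eq ..).mp
      (CharacterModule.dual_rTensor_conj_homEquiv ..))
    ((CharacterModule.homEquiv.toLinearMap_symm_comp_eq ..).mp
      (CharacterModule.dual_rTensor_conj_homEquiv ..))

theorem lTensor_injective_iff_lcomp_surjective {f : A →ₗ[R] B} :
    Function.Injective (f.lTensor C) ↔
      Function.Surjective (f.lcomp R (CharacterModule C)) := by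
  rw [LinearMap.lTensor_inj_iff_rTensor_inj, rTensor_injective_iff_lcomp_surjective]

theorem lTensor_surjective_iff_compRight_dual_injective {g : A →ₗ[R] B} :
    Function.Surjective (g.lTensor C) ↔
      Function.Injective ((CharacterModule.dual g).compRight R (M := C)) := by
  have hconj : CharacterModule.homEquiv.symm.toLinearMap ∘ₗ CharacterModule.dual (g.lTensor C) ∘ₗ
      CharacterModule.homEquiv.toLinearMap = (CharacterModule.dual g).compRight R := rfl
  rw [← CharacterModule.dual_injective_iff_surjective, ← hconj]
  simp only [LinearMap.coe_comp, LinearEquiv.coe_coe, EmbeddingLike.comp_injective,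
    EquivLike.injective_comp]

end CharacterModule

section CompRight

variable {R : Type*} [CommRing R] {A B D : Type*} [AddCommGroup A] [Module R A]
  [AddCommGroup B] [Module R B] [AddCommGroup D] [Module R D]
  (C : Type*) [AddCommGroup C] [Module R C]

theorem compRight_injective {f : A →ₗ[R] B} (hf : Function.Injective f) :
    Function.Injective (f.compRight R (M := C)) :=
  fun _ _ ↦ (LinearMap.cancel_left hf).mp

theorem compRight_exact {f : A →ₗ[R] B} {g : B →ₗ[R] D} (hf : Function.Injective f)
    (hfg : Function.Exact f g) :
    Function.Exact (f.compRight R (M := C)) (g.compRight R (M := C)) := by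
  intro φ
  constructor
  · intro hφ
    let e := LinearEquiv.ofInjective f hf
    have hmem (c : C) : φ c ∈ f.range := (hfg _).mp congr($hφ c)
    refine ⟨e.symm ∘ₗ φ.codRestrict _ hmem, ?_⟩
    ext c
    exact congr_arg Subtype.val (e.apply_symm_apply ⟨φ c, hmem c⟩)
  · rintro ⟨ψ, rfl⟩
    ext c
    exact hfg.apply_apply_eq_zero _

end CompRight

section FullSupport

variable {R : Type*} [CommRing R] [IsNoetherianRing R] {C : Type*} [AddCommGroup C] [Module R C]
  [Module.Finite R C]

theorem subsingleton_of_subsingleton_linearMap (hC : Module.support R C = Set.univ)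
    (Y : Type*) [AddCommGroup Y] [Module R Y] [Subsingleton (C →ₗ[R] Y)] : Subsingleton Y := by
  refine subsingleton_of_forall_eq 0 fun y ↦ ?_
  have hom_span : Subsingleton (C →ₗ[R] Submodule.span R {y}) :=
    (compRight_injective C (Submodule.subtype_injective _)).subsingleton
  obtain ⟨r, hr, hreg⟩ := IsSMulRegular.subsingleton_linearMap_iff.mp hom_span
  obtain ⟨k, hk⟩ : IsNilpotent r := by
    rw [Module.support_eq_zeroLocus, PrimeSpectrum.zeroLocus_eq_univ_iff] at hC
    exact hC hr
  have span_zero : Subsingleton (Submodule.span R {y}) := (hk ▸ hreg.pow k).subsingleton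
  rwa [Submodule.subsingleton_iff_eq_bot, Submodule.span_singleton_eq_bot] at span_zero

theorem surjective_of_lTensor_surjective (hC : Module.support R C = Set.univ)
    {X Y : Type*} [AddCommGroup X] [Module R X] [AddCommGroup Y] [Module R Y] {g : X →ₗ[R] Y}
    (hg : Function.Surjective (g.lTensor C)) : Function.Surjective g := by
  rw [← CharacterModule.dual_injective_iff_surjective, ← LinearMap.ker_eq_bot,
    ← Submodule.subsingleton_iff_eq_bot]
  have hom_ker : Subsingleton (C →ₗ[R] (CharacterModule.dual g).ker) := by
    refine subsingleton_of_forall_eq 0 fun ψ ↦ ?_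
    have hψ : Submodule.subtype _ ∘ₗ ψ = 0 :=
      lTensor_surjective_iff_compRight_dual_injective.mp hg (by ext c : 1; exact (ψ c).2)
    exact compRight_injective C (Submodule.subtype_injective _) hψ
  exact subsingleton_of_subsingleton_linearMap hC _

end FullSupport

section Ext

variable {𝒜 : Type u} [Category.{v} 𝒜] [Abelian 𝒜] {X Y : 𝒜}

theorem subsingleton_abelianExt_iff_of_resolution [HasExt.{w} 𝒜] (P : ProjectiveResolution X)
    (i : ℕ) :
    Subsingleton (Abelian.Ext X Y (i + 1)) ↔ ∀ φ : P.complex.X (i + 1) ⟶ Y,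
      P.complex.d (i + 2) (i + 1) ≫ φ = 0 → ∃ ψ, P.complex.d (i + 1) i ≫ ψ = φ := by
  rw [subsingleton_iff_forall_eq 0]
  constructor
  · intro h φ hφ
    exact (P.extMk_eq_zero_iff φ (i + 2) rfl hφ i rfl).mp (h _)
  · intro h x
    obtain ⟨φ, hφ, rfl⟩ := P.extMk_surjective x (i + 2) rfl
    exact (P.extMk_eq_zero_iff φ (i + 2) rfl hφ i rfl).mpr (h φ hφ)

theorem subsingleton_ext_iff_of_resolution (R : Type*) [Ring R] [Linear R 𝒜] [EnoughProjectives 𝒜]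
    (P : ProjectiveResolution X) (i : ℕ) :
    Subsingleton (((Ext R 𝒜 (i + 1)).obj (Opposite.op X)).obj Y) ↔
      ∀ φ : P.complex.X (i + 1) ⟶ Y,
        P.complex.d (i + 2) (i + 1) ≫ φ = 0 → ∃ ψ, P.complex.d (i + 1) i ≫ ψ = φ := by
  rw [← ModuleCat.isZero_iff_subsingleton, (P.isoExt (R := R) (i + 1) Y).isZero_iff,
    ← HomologicalComplex.exactAt_iff_isZero_homology,
    HomologicalComplex.exactAt_iff' _ i (i + 1) (i + 2) (by simp) (by simp),
    ShortComplex.moduleCat_exact_iff]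
  rfl

theorem subsingleton_ext_iff_subsingleton_abelianExt [HasExt.{w} 𝒜] (R : Type*) [Ring R]
    [Linear R 𝒜] [EnoughProjectives 𝒜] (i : ℕ) :
    Subsingleton (((Ext R 𝒜 (i + 1)).obj (Opposite.op X)).obj Y) ↔
      Subsingleton (Abelian.Ext X Y (i + 1)) :=
  (subsingleton_ext_iff_of_resolution R (.of X) i).trans
    (subsingleton_abelianExt_iff_of_resolution (.of X) i).symm

variable [HasExt.{w} 𝒜] {S : ShortComplex 𝒜}

theorem subsingleton_abelianExt_X₁_of_surjective (hS : S.ShortExact) {i : ℕ}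
    [Subsingleton (Abelian.Ext X S.X₂ (i + 1))]
    (hg : Function.Surjective fun x : Abelian.Ext X S.X₂ i ↦ x.comp (.mk₀ S.g) (add_zero i)) :
    Subsingleton (Abelian.Ext X S.X₁ (i + 1)) := by
  refine subsingleton_of_forall_eq 0 fun x₁ ↦ ?_
  obtain ⟨x₃, rfl⟩ := Abelian.Ext.covariant_sequence_exact₁ X hS x₁ (Subsingleton.elim _ _) rfl
  obtain ⟨x₂, rfl⟩ := hg x₃
  dsimp only
  rw [Abelian.Ext.comp_assoc_of_second_deg_zero, hS.comp_extClass, Abelian.Ext.comp_zero]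

theorem subsingleton_abelianExt_from_X₁ (hS : S.ShortExact) {i : ℕ}
    [Subsingleton (Abelian.Ext S.X₂ Y i)] [Subsingleton (Abelian.Ext S.X₃ Y (i + 1))] :
    Subsingleton (Abelian.Ext S.X₁ Y i) := by
  refine subsingleton_of_forall_eq 0 fun x₁ ↦ ?_
  obtain ⟨x₂, rfl⟩ := Abelian.Ext.contravariant_sequence_exact₁ hS Y x₁ (add_comm 1 i)
    (Subsingleton.elim _ _)
  rw [Subsingleton.elim x₂ 0, Abelian.Ext.comp_zero]

theorem exists_f_comp_eq_of_subsingleton_abelianExt (hS : S.ShortExact)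
    [Subsingleton (Abelian.Ext S.X₃ Y 1)] (φ : S.X₁ ⟶ Y) : ∃ ψ : S.X₂ ⟶ Y, S.f ≫ ψ = φ := by
  obtain ⟨x, hx⟩ := Abelian.Ext.contravariant_sequence_exact₁ hS Y (.mk₀ φ) (add_zero 1)
    (Subsingleton.elim _ _)
  obtain ⟨ψ, rfl⟩ := (Abelian.Ext.mk₀_bijective _ _).2 x
  exact ⟨ψ, (Abelian.Ext.mk₀_bijective _ _).1 (by rw [← hx, Abelian.Ext.mk₀_comp_mk₀])⟩

end Ext

section Modules

variable {R : Type u} [CommRing R] {S : ShortComplex (ModuleCat.{u} R)}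

theorem subsingleton_ext_X₁ (hS : S.ShortExact) (X : ModuleCat.{u} R) (i : ℕ)
    (hg : Function.Surjective (S.g.hom.compRight R (M := X)))
    (h₂ : Subsingleton (((Ext R (ModuleCat R) (i + 1)).obj (Opposite.op X)).obj S.X₂))
    (h₃ : 0 < i → Subsingleton (((Ext R (ModuleCat R) i).obj (Opposite.op X)).obj S.X₃)) :
    Subsingleton (((Ext R (ModuleCat R) (i + 1)).obj (Opposite.op X)).obj S.X₁) := by
  rw [subsingleton_ext_iff_subsingleton_abelianExt] at h₂ ⊢
  refine subsingleton_abelianExt_X₁_of_surjective hS fun x₃ ↦ ?_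
  rcases i with _ | i
  · obtain ⟨φ, rfl⟩ := (Abelian.Ext.mk₀_bijective _ _).2 x₃
    obtain ⟨ψ, hψ⟩ := hg φ.hom
    refine ⟨.mk₀ (ModuleCat.ofHom ψ), ?_⟩
    dsimp only
    rw [Abelian.Ext.mk₀_comp_mk₀]
    congr 1
    exact ModuleCat.hom_ext hψ
  · have := (subsingleton_ext_iff_subsingleton_abelianExt R i).mp (h₃ i.succ_pos)
    exact ⟨0, Subsingleton.elim _ _⟩

section Tor

open MonoidalCategory

variable (C : ModuleCat.{u} R)

theorem subsingleton_tor_iff_of_resolution {D : ModuleCat.{u} R} (P : ProjectiveResolution D)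
    (i : ℕ) :
    Subsingleton (((Tor (ModuleCat R) (i + 1)).obj C).obj D) ↔
      Function.Exact ((P.complex.d (i + 2) (i + 1)).hom.lTensor C)
        ((P.complex.d (i + 1) i).hom.lTensor C) := by
  rw [← ModuleCat.isZero_iff_subsingleton]
  refine (P.isoLeftDerivedObj ((tensoringLeft (ModuleCat R)).obj C) (i + 1)).isZero_iff.trans <|
    (HomologicalComplex.exactAt_iff_isZero_homology ..).symm.trans ?_
  rw [HomologicalComplex.exactAt_iff' _ (i + 2) (i + 1) i (by simp) (by simp),
    ShortComplex.ShortExact.moduleCat_exact_iff_function_exact]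
  rfl

theorem subsingleton_tor_iff_subsingleton_abelianExt (D : ModuleCat.{u} R) (i : ℕ) :
    Subsingleton (((Tor (ModuleCat R) (i + 1)).obj C).obj D) ↔
      Subsingleton (Abelian.Ext D (ModuleCat.of R (CharacterModule C)) (i + 1)) := by
  let P := ProjectiveResolution.of D
  rw [subsingleton_tor_iff_of_resolution C P, exact_lTensor_iff_exact_lcomp,
    subsingleton_abelianExt_iff_of_resolution P]
  constructor
  · intro h φ hφ
    obtain ⟨ψ, hψ⟩ := (h φ.hom).mp congr(($hφ).hom)
    exact ⟨ModuleCat.ofHom ψ, ModuleCat.hom_ext hψ⟩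
  · intro h φ
    constructor
    · intro hφ
      obtain ⟨ψ, hψ⟩ := h (ModuleCat.ofHom φ) (ModuleCat.hom_ext hφ)
      exact ⟨ψ.hom, congr(($hψ).hom)⟩
    · rintro ⟨ψ, rfl⟩
      ext1 x
      have hdd : P.complex.d (i + 1) i (P.complex.d (i + 2) (i + 1) x) = 0 :=
        congr(($(P.complex.d_comp_d (i + 2) (i + 1) i)).hom x)
      exact congr(ψ $hdd).trans ψ.map_zero

theorem subsingleton_tor_X₁ (hS : S.ShortExact) (i : ℕ)
    (h₂ : Subsingleton (((Tor (ModuleCat R) (i + 1)).obj C).obj S.X₂))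
    (h₃ : Subsingleton (((Tor (ModuleCat R) (i + 2)).obj C).obj S.X₃)) :
    Subsingleton (((Tor (ModuleCat R) (i + 1)).obj C).obj S.X₁) := by
  rw [subsingleton_tor_iff_subsingleton_abelianExt] at h₂ h₃ ⊢
  exact subsingleton_abelianExt_from_X₁ hS

theorem lTensor_f_injective (hS : S.ShortExact)
    (h₃ : Subsingleton (((Tor (ModuleCat R) 1).obj C).obj S.X₃)) :
    Function.Injective (S.f.hom.lTensor C) := by
  rw [subsingleton_tor_iff_subsingleton_abelianExt] at h₃
  rw [lTensor_injective_iff_lcomp_surjective]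
  intro φ
  obtain ⟨ψ, hψ⟩ := exists_f_comp_eq_of_subsingleton_abelianExt hS (ModuleCat.ofHom φ)
  exact ⟨ψ.hom, congr(($hψ).hom)⟩

end Tor

end Modules

section EvalMap

variable {R : Type} [CommRing R] {C L M N : Type} [AddCommGroup C] [Module R C]
  [AddCommGroup L] [Module R L] [AddCommGroup M] [Module R M] [AddCommGroup N] [Module R N]

theorem evalMap_comp_lTensor_compRight (g : M →ₗ[R] N) :
    evalMap R C N ∘ₗ (g.compRight R).lTensor C = g ∘ₗ evalMap R C M :=
  TensorProduct.ext' fun _ _ ↦ rfl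

variable {f : L →ₗ[R] M} {g : M →ₗ[R] N}

theorem compRight_surjective_of_evalMap [IsNoetherianRing R] [Module.Finite R C]
    (hC : Module.support R C = Set.univ) (hg : Function.Surjective g)
    (hM : Function.Surjective (evalMap R C M)) (hN : Function.Injective (evalMap R C N)) :
    Function.Surjective (g.compRight R (M := C)) := by
  refine surjective_of_lTensor_surjective hC (Function.Surjective.of_comp_left ?_ hN)
  rw [← LinearMap.coe_comp, evalMap_comp_lTensor_compRight]
  exact hg.comp hM

theorem evalMap_bijective_of_exact (hf : Function.Injective f) (hfg : Function.Exact f g)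
    (hg : Function.Surjective (g.compRight R (M := C)))
    (hfC : Function.Injective ((f.compRight R (M := C)).lTensor C))
    (hM : Function.Bijective (evalMap R C M)) (hN : Function.Injective (evalMap R C N)) :
    Function.Bijective (evalMap R C L) :=
  LinearMap.bijective_of_bijective_of_injective_of_left_exact
    ((f.compRight R).lTensor C) ((g.compRight R).lTensor C) f g _ _ _
    (evalMap_comp_lTensor_compRight f).symm (evalMap_comp_lTensor_compRight g).symm
    (lTensor_exact C (compRight_exact C hf hfg) hg) hfg hM hN hfC hf

end EvalMap

/-- Bass class two-of-three lemma for a short exact sequence `0 → L → M → N → 0`. -/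
theorem bass_class_two_of_three
    (R : Type) [CommRing R] [IsNoetherianRing R]
    (C : Type) [AddCommGroup C] [Module R C] [Module.Finite R C]
    (hsupp : Module.support R C = Set.univ)
    (L M N : Type) [AddCommGroup L] [Module R L] [AddCommGroup M] [Module R M]
    [AddCommGroup N] [Module R N]
    (f : L →ₗ[R] M) (g : M →ₗ[R] N)
    (hf : Function.Injective f) (hg : Function.Surjective g) (hfg : Function.Exact f g)
    (m n : ℕ)
    (hevM : Function.Bijective (evalMap R C M))
    (hevN : Function.Bijective (evalMap R C N))
    (hextM : ∀ i : ℕ, 0 < i → i ≤ m + 1 →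
      Subsingleton (((Ext R (ModuleCat R) i).obj
        (Opposite.op (ModuleCat.of R C))).obj (ModuleCat.of R M)))
    (hextN : ∀ i : ℕ, 0 < i → i ≤ m →
      Subsingleton (((Ext R (ModuleCat R) i).obj
        (Opposite.op (ModuleCat.of R C))).obj (ModuleCat.of R N)))
    (htorM : ∀ i : ℕ, 0 < i → i ≤ n →
      Subsingleton (((Tor (ModuleCat R) i).obj
        (ModuleCat.of R C)).obj (ModuleCat.of R (C →ₗ[R] M))))
    (htorN : ∀ i : ℕ, 0 < i → i ≤ n + 1 →
      Subsingleton (((Tor (ModuleCat R) i).obj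
        (ModuleCat.of R C)).obj (ModuleCat.of R (C →ₗ[R] N)))) :
    Function.Bijective (evalMap R C L) ∧
    (∀ i : ℕ, 0 < i → i ≤ m + 1 →
      Subsingleton (((Ext R (ModuleCat R) i).obj
        (Opposite.op (ModuleCat.of R C))).obj (ModuleCat.of R L))) ∧
    (∀ i : ℕ, 0 < i → i ≤ n →
      Subsingleton (((Tor (ModuleCat R) i).obj
        (ModuleCat.of R C)).obj (ModuleCat.of R (C →ₗ[R] L)))) := by
  have hgC := compRight_surjective_of_evalMap hsupp hg hevM.surjective hevN.injective
  have hfgC := compRight_exact C hf hfg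
  have hS : (ModuleCat.shortComplexOfCompEqZero f g hfg.linearMap_comp_eq_zero).ShortExact :=
    ModuleCat.shortComplex_shortExact _ hfg hf hg
  have hSC : (ModuleCat.shortComplexOfCompEqZero (f.compRight R (M := C)) (g.compRight R (M := C))
      hfgC.linearMap_comp_eq_zero).ShortExact :=
    ModuleCat.shortComplex_shortExact _ hfgC (compRight_injective C hf) hgC
  refine ⟨?_, ?_, ?_⟩
  · have hfC := lTensor_f_injective (.of R C) hSC (htorN 1 one_pos (Nat.le_add_left 1 n))
    exact evalMap_bijective_of_exact hf hfg hgC hfC hevM hevN.injective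
  · rintro (_ | i) hi him
    · exact absurd hi (lt_irrefl 0)
    · exact subsingleton_ext_X₁ hS (.of R C) i hgC (hextM _ hi him)
        fun hi₀ ↦ hextN i hi₀ (Nat.le_of_succ_le_succ him)
  · rintro (_ | i) hi hin
    · exact absurd hi (lt_irrefl 0)
    · exact subsingleton_tor_X₁ (.of R C) hSC i (htorM _ hi hin)
        (htorN _ (Nat.succ_pos _) (Nat.succ_le_succ hin))
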